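/- arXiv:1807.09653 — 2 statements merged into one kernel-verified Lean document; each statement's English description precedes it below -/
import Mathlib

section
/- Integration by parts for balanced functions (the t = 1/2 case of the paper's formula): ∫_{[c,d]} u·q dκ + ∫_{[c,d]} v·p dκ = (u_c + ∫_{[c,d]} p dκ)·(v_c + ∫_{[c,d]} q dκ) − u_c·v_c. -/
open MeasureTheory

/-!
Write `K (t, x) = (1_{t < x} + 1_{t ≤ x}) / 2`. On `[c, d]` the balanced antiderivative of `p` is
`u x = u_c + ∫ K (t, x) p t dμ(t)` with `μ` the restriction of `κ` to `[c, d]`, and the kernel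
satisfies `K (t, x) + K (x, t) = 1`, on the diagonal too: this is what the value `1/2` is for.
By Fubini, swapping the order of integration in one of the two double integrals turns
`∬ K (t, x) p t q x + ∬ K (t, x) q t p x` into `∬ p t q x = (∫ p) (∫ q)`. The remaining terms
`u_c ∫ q + v_c ∫ p` complete the product.
-/

/-- The balanced Heaviside kernel: `1` above the diagonal, `1/2` on it, `0` below. -/
noncomputable def balK (z : ℝ × ℝ) : ℂ :=
  ((if z.1 < z.2 then 1 else 0) + (if z.1 ≤ z.2 then 1 else 0)) / 2

lemma balK_add_swap (t x : ℝ) : balK (t, x) + balK (x, t) = 1 := by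
  unfold balK
  rcases lt_trichotomy t x with h | h | h
  · simp [h, h.le, not_lt.2 h.le, not_le.2 h]
  · simp [h]; norm_num
  · simp [h, h.le, not_lt.2 h.le, not_le.2 h]

lemma norm_balK_le (z : ℝ × ℝ) : ‖balK z‖ ≤ 1 := by
  unfold balK
  split_ifs <;> norm_num

lemma measurable_balK : Measurable balK := by
  unfold balK
  refine Measurable.div_const (Measurable.add ?_ ?_) 2
  · exact Measurable.ite (measurableSet_lt measurable_fst measurable_snd)
      measurable_const measurable_const
  · exact Measurable.ite (measurableSet_le measurable_fst measurable_snd)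
      measurable_const measurable_const

lemma integrable_balK_mul {μ : Measure ℝ} [IsFiniteMeasure μ] {p q : ℝ → ℂ}
    (hp : Integrable p μ) (hq : Integrable q μ) :
    Integrable (fun z : ℝ × ℝ => balK z * (p z.1 * q z.2)) (μ.prod μ) :=
  (hp.mul_prod hq).bdd_mul measurable_balK.aestronglyMeasurable
    (Filter.Eventually.of_forall norm_balK_le)

/-- The two kernel double integrals add up to the full product, because swapping the variables in
the second one replaces `K (t, x)` by `1 - K (t, x)`. -/
lemma integral_balK_add {μ : Measure ℝ} [IsFiniteMeasure μ] {p q : ℝ → ℂ}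
    (hp : Integrable p μ) (hq : Integrable q μ) :
    (∫ x, ∫ t, balK (t, x) * (p t * q x) ∂μ ∂μ) + (∫ x, ∫ t, balK (t, x) * (q t * p x) ∂μ ∂μ)
      = (∫ t, p t ∂μ) * ∫ t, q t ∂μ := by
  have h1 := integrable_balK_mul hp hq
  have h2 := integrable_balK_mul hq hp
  have h3 : Integrable (fun z : ℝ × ℝ => balK z.swap * (q z.swap.1 * p z.swap.2)) (μ.prod μ) :=
    h2.swap
  rw [← integral_prod_symm _ h1, ← integral_prod_symm _ h2,
    ← integral_prod_swap (fun z : ℝ × ℝ => balK z * (q z.1 * p z.2)),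
    ← integral_add h1 h3, ← integral_prod_mul]
  refine integral_congr_ae (Filter.Eventually.of_forall fun z => ?_)
  simp only [Prod.swap]
  linear_combination (p z.1 * q z.2) * balK_add_swap z.1 z.2

/-- On `[c, d]`, the balanced antiderivative is given by the kernel `balK` against the restricted
measure. -/
lemma balanced_eq_integral_balK {c d x : ℝ} (hx : x ∈ Set.Icc c d) {κ : Measure ℝ} {p : ℝ → ℂ}
    (hp : Integrable p κ) :
    ((∫ t in Set.Ico c x, p t ∂κ) + ∫ t in Set.Icc c x, p t ∂κ) / 2
      = ∫ t in Set.Icc c d, balK (t, x) * p t ∂κ := by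
  have e1 : Set.Iio x ∩ Set.Icc c d = Set.Ico c x := by
    ext t; simp only [Set.mem_inter_iff, Set.mem_Iio, Set.mem_Icc, Set.mem_Ico]
    exact ⟨fun h => ⟨h.2.1, h.1⟩, fun h => ⟨h.2, h.1, h.2.le.trans hx.2⟩⟩
  have e2 : Set.Iic x ∩ Set.Icc c d = Set.Icc c x := by
    ext t; simp only [Set.mem_inter_iff, Set.mem_Iic, Set.mem_Icc]
    exact ⟨fun h => ⟨h.2.1, h.1⟩, fun h => ⟨h.2, h.1, h.2.trans hx.2⟩⟩
  have hp' : Integrable p (κ.restrict (Set.Icc c d)) := hp.restrict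
  rw [← e1, ← e2, ← Measure.restrict_restrict measurableSet_Iio,
    ← Measure.restrict_restrict measurableSet_Iic, ← integral_indicator measurableSet_Iio,
    ← integral_indicator measurableSet_Iic,
    ← integral_add (hp'.indicator measurableSet_Iio) (hp'.indicator measurableSet_Iic),
    ← integral_div]
  refine integral_congr_ae (Filter.Eventually.of_forall fun t => ?_)
  simp only [balK, Set.indicator, Set.mem_Iio, Set.mem_Iic]
  split_ifs <;> ring

/-- One of the two integrals in the formula, as a boundary term plus a kernel double integral. -/
lemma integral_balanced_mul {c d : ℝ} {κ : Measure ℝ} [IsFiniteMeasure κ] {p q : ℝ → ℂ}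
    (hp : Integrable p κ) (hq : Integrable q κ) {uc : ℂ} {u : ℝ → ℂ}
    (hu : ∀ x, u x = uc + ((∫ t in Set.Ico c x, p t ∂κ) + ∫ t in Set.Icc c x, p t ∂κ) / 2) :
    ∫ x in Set.Icc c d, u x * q x ∂κ = uc * (∫ x in Set.Icc c d, q x ∂κ)
      + ∫ x in Set.Icc c d, ∫ t in Set.Icc c d, balK (t, x) * (p t * q x) ∂κ ∂κ := by
  have h := (integrable_balK_mul (hp.restrict (s := Set.Icc c d))
    (hq.restrict (s := Set.Icc c d))).integral_prod_right
  rw [← integral_const_mul, ← integral_add ((hq.restrict).const_mul uc) h]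
  refine setIntegral_congr_fun measurableSet_Icc fun x hx => ?_
  simp only [hu x, balanced_eq_integral_balK hx hp, ← mul_assoc, integral_mul_const]
  ring

/-- **Integration by parts for balanced antiderivatives** (the `t = 1/2` case).
Let `c ≤ d`, let `κ` be a finite positive Borel measure on `[c,d]`, let `p, q` be
`κ`-integrable complex functions, and let `u, v` be the balanced antiderivatives
`u x = u_c + (∫_{[c,x)} p dκ + ∫_{[c,x]} p dκ)/2` and similarly for `v`.  Then
`∫_{[c,d]} u·q dκ + ∫_{[c,d]} v·p dκ
  = (u_c + ∫_{[c,d]} p dκ)·(v_c + ∫_{[c,d]} q dκ) − u_c·v_c`. -/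
theorem stmt_0 (c d : ℝ) (hcd : c ≤ d) (κ : Measure ℝ) [IsFiniteMeasure κ]
    (hsupp : κ (Set.Icc c d)ᶜ = 0)
    (p q : ℝ → ℂ) (hp : Integrable p κ) (hq : Integrable q κ)
    (uc vc : ℂ) (u v : ℝ → ℂ)
    (hu : ∀ x, u x = uc + ((∫ t in Set.Ico c x, p t ∂κ) + ∫ t in Set.Icc c x, p t ∂κ) / 2)
    (hv : ∀ x, v x = vc + ((∫ t in Set.Ico c x, q t ∂κ) + ∫ t in Set.Icc c x, q t ∂κ) / 2) :
    (∫ x in Set.Icc c d, u x * q x ∂κ) + ∫ x in Set.Icc c d, v x * p x ∂κ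
      = (uc + ∫ t in Set.Icc c d, p t ∂κ) * (vc + ∫ t in Set.Icc c d, q t ∂κ) - uc * vc := by
  rw [integral_balanced_mul hp hq hu, integral_balanced_mul hq hp hv]
  have h := integral_balK_add (hp.restrict (s := Set.Icc c d)) (hq.restrict (s := Set.Icc c d))
  linear_combination h
end

section
/- Existence and uniqueness of left-continuous solutions (Bennewitz): for every x0 ∈ (a,b) and every u0 ∈ ℂⁿ there exists exactly one left-continuous function u : [x0,b) → ℂⁿ of locally bounded variation satisfying u(x) = u0 + ∫_{[x0,x)} (M(t)·u(t) + g(t)) dν(t) for all x ∈ [x0,b). -/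
open MeasureTheory Filter

/-!
The integral operator `T u (x) = u0 + ∫_{[x0,x)} (M u + g) dν` is a contraction for a suitable
weighted sup norm on each `[x0,d]`, `d < b`. Because the integral runs over the half-open interval
`[x0,x)`, no smallness or invertibility condition on the atoms of `r = M dν` is needed.

For a finite measure `μ` with `F t = μ (-∞,t)` and total mass `A`, the increasing weight
`φ t = (4 A + 1) ^ ⌈4 F t⌉` satisfies `∫_{t < x} φ dμ ≤ φ x / 2` (`exists_weight`). This rests on
`μ {t < x | F t > c} ≤ F x - c` for `c ≤ F x` (`measure_gt_le`): at points `t < x` where `φ` has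
already reached the value `φ x`, the measure `μ` carries mass at most `1/4`, and elsewhere `φ` is
smaller by a factor `4 A + 1`. With `μ = ‖M‖ dν` on `[x0,d)`, an estimate `‖u - v‖ ≤ C φ` on
`[x0,d)` therefore gives `‖T u - T v‖ ≤ (C/2) φ` (`contraction`).

Two solutions of locally bounded variation differ by at most `C φ` for some `C`, hence by
`C 2⁻ᵏ φ` for all `k`, so they agree. The Picard iterates converge geometrically on every
`[x0,d]`, and the contraction estimate shows that their limit is a fixed point of `T`. Such a fixed
point is an indefinite integral, so it has locally bounded variation (`lbv_integral`) and is
left-continuous (`leftCont_integral`).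
-/

/-! ### A weight adapted to a finite measure -/

/-- For `F t = μ (-∞,t)`, the set `{t < x | c < F t}` has measure at most
`max (F x - c) 0`, because it is an increasing countable union of intervals `[s,x)` with `c < F s`. -/
theorem measure_gt_le (μ : Measure ℝ) [IsFiniteMeasure μ] (x c : ℝ) (δ : ℝ)
    (hx : μ.real (Set.Iio x) ≤ c + δ) :
    μ {t | t < x ∧ c < μ.real (Set.Iio t)} ≤ ENNReal.ofReal δ := by
  set S : Set ℝ := {t | t < x ∧ c < μ.real (Set.Iio t)} with hS
  have hIco : ∀ s ∈ S, μ (Set.Ico s x) ≤ ENNReal.ofReal δ := by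
    intro s hs
    rw [← ENNReal.ofReal_toReal (measure_ne_top μ (Set.Ico s x))]
    apply ENNReal.ofReal_le_ofReal
    have h1 : μ.real (Set.Iio s ∪ Set.Ico s x) = μ.real (Set.Iio s) + μ.real (Set.Ico s x) :=
      measureReal_union (Set.disjoint_left.2 fun t ht ht' => not_lt.2 ht'.1 ht) measurableSet_Ico
    rw [Set.Iio_union_Ico_eq_Iio hs.1.le] at h1
    have h2 := hs.2
    change μ.real (Set.Ico s x) ≤ δ
    linarith
  obtain ⟨C, hCS, hCc, hC⟩ : ∃ C ⊆ S, C.Countable ∧ ∀ t ∈ S, ∃ s ∈ C, s ≤ t := by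
    rcases S.eq_empty_or_nonempty with h0 | hne
    · exact ⟨∅, by simp, by simp, by simp [h0]⟩
    by_cases hb : ∃ m ∈ S, ∀ t ∈ S, m ≤ t
    · obtain ⟨m, hm, hm'⟩ := hb
      exact ⟨{m}, by simpa using hm, by simp, fun t ht => ⟨m, rfl, hm' t ht⟩⟩
    · push Not at hb
      -- without a least element, the rational points lying above some point of `S` are cofinal
      refine ⟨S ∩ Set.range ((↑) : ℚ → ℝ), Set.inter_subset_left,
        (Set.countable_range _).mono Set.inter_subset_right, fun t ht => ?_⟩
      obtain ⟨s, hs, hst⟩ := hb t ht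
      obtain ⟨q, hq1, hq2⟩ := exists_rat_btwn hst
      refine ⟨q, ⟨⟨hq2.trans ht.1, hs.2.trans_le ?_⟩, q, rfl⟩, hq2.le⟩
      exact measureReal_mono (Set.Iio_subset_Iio hq1.le)
  have hsub : S ⊆ ⋃ s : C, Set.Ico (s : ℝ) x := by
    intro t ht
    obtain ⟨s, hs, hst⟩ := hC t ht
    exact Set.mem_iUnion.2 ⟨⟨s, hs⟩, hst, ht.1⟩
  have : Countable C := hCc.to_subtype
  have hdir : Directed (· ⊆ ·) fun s : C => Set.Ico (s : ℝ) x := by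
    refine Monotone.directed_le (β := (Set ℝ)) (α := Cᵒᵈ) (f := fun s => Set.Ico ((OrderDual.ofDual s : C) : ℝ) x) ?_
    intro s t hst
    exact Set.Ico_subset_Ico_left hst
  calc μ S ≤ μ (⋃ s : C, Set.Ico (s : ℝ) x) := measure_mono hsub
    _ = ⨆ s : C, μ (Set.Ico (s : ℝ) x) := hdir.measure_iUnion
    _ ≤ _ := iSup_le fun s => hIco s (hCS s.2)

/-- A weight `φ` for which integration over `(-∞,x)` against `μ` gains a factor `1/2`, even though
`μ` may have large atoms. -/
theorem exists_weight (μ : Measure ℝ) [IsFiniteMeasure μ] :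
    ∃ φ : ℝ → ℝ, Monotone φ ∧ (∀ t, 1 ≤ φ t) ∧
      ∀ x, ∫⁻ t in Set.Iio x, ENNReal.ofReal (φ t) ∂μ ≤ ENNReal.ofReal (φ x / 2) := by
  -- The mass bound `1/4` and the ratio `K ≥ 4 * A` of consecutive values of the weight each
  -- contribute a quarter of `φ x`.
  set A := μ.real Set.univ
  have hA : 0 ≤ A := measureReal_nonneg
  set K : ℝ := 4 * A + 1 with hK
  have hK1 : 1 ≤ K := by linarith
  set F : ℝ → ℝ := fun t => μ.real (Set.Iio t) with hF
  have hFm : Monotone F := fun s t h => measureReal_mono (Set.Iio_subset_Iio h)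
  set m : ℝ → ℕ := fun t => ⌈4 * F t⌉₊ with hm
  have hmm : Monotone m := fun s t h => Nat.ceil_mono (by linarith [hFm h])
  refine ⟨fun t => K ^ m t, fun s t h => pow_le_pow_right₀ hK1 (hmm h),
    fun t => one_le_pow₀ hK1, fun x => ?_⟩
  rcases hp : m x with _ | p
  · have h0 : F x ≤ 0 := by
      have := Nat.ceil_eq_zero.1 hp
      linarith
    have h1 : μ (Set.Iio x) = 0 := by
      have : F x = 0 := le_antisymm h0 measureReal_nonneg
      exact (measureReal_eq_zero_iff (measure_ne_top _ _)).1 this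
    rw [Measure.restrict_eq_zero.2 h1]
    simp
  · set S : Set ℝ := {t | t < x ∧ (p / 4 : ℝ) < F t} with hS
    have hSm : μ S ≤ ENNReal.ofReal (1 / 4) := by
      refine measure_gt_le μ x _ _ ?_
      have h1 : 4 * F x ≤ (m x : ℝ) := Nat.le_ceil _
      rw [hp] at h1
      push_cast at h1
      change F x ≤ _
      linarith
    have hpt : ∀ t ∈ Set.Iio x, ENNReal.ofReal (K ^ m t) ≤
        ENNReal.ofReal (K ^ p) + S.indicator (fun _ => ENNReal.ofReal (K ^ (p + 1))) t := by
      intro t ht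
      by_cases htS : t ∈ S
      · rw [Set.indicator_of_mem htS]
        refine le_add_left (ENNReal.ofReal_le_ofReal (pow_le_pow_right₀ hK1 ?_))
        exact (hmm (le_of_lt ht)).trans hp.le
      · rw [Set.indicator_of_notMem htS, add_zero]
        refine ENNReal.ofReal_le_ofReal (pow_le_pow_right₀ hK1 ?_)
        have : F t ≤ p / 4 := by
          by_contra h
          exact htS ⟨ht, not_le.1 h⟩
        exact Nat.ceil_le.2 (by linarith)
    calc ∫⁻ t in Set.Iio x, ENNReal.ofReal (K ^ m t) ∂μ
        ≤ ∫⁻ t in Set.Iio x, (ENNReal.ofReal (K ^ p) +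
            S.indicator (fun _ => ENNReal.ofReal (K ^ (p + 1))) t) ∂μ :=
          setLIntegral_mono' measurableSet_Iio hpt
      _ ≤ ∫⁻ t, (ENNReal.ofReal (K ^ p) +
            S.indicator (fun _ => ENNReal.ofReal (K ^ (p + 1))) t) ∂μ := setLIntegral_le_lintegral _ _
      _ = ENNReal.ofReal (K ^ p) * μ Set.univ +
            ∫⁻ t, S.indicator (fun _ => ENNReal.ofReal (K ^ (p + 1))) t ∂μ := by
          rw [lintegral_add_left measurable_const, lintegral_const]
      _ ≤ ENNReal.ofReal (K ^ p) * ENNReal.ofReal A +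
            ENNReal.ofReal (K ^ (p + 1)) * ENNReal.ofReal (1 / 4) := by
          gcongr
          · exact (ENNReal.ofReal_toReal (measure_ne_top μ _)).ge
          · exact (lintegral_indicator_const_le _ _).trans (by gcongr)
      _ = ENNReal.ofReal (K ^ p * A + K ^ (p + 1) * (1 / 4)) := by
          rw [← ENNReal.ofReal_mul (by positivity), ← ENNReal.ofReal_mul (by positivity),
            ← ENNReal.ofReal_add (by positivity) (by positivity)]
      _ ≤ ENNReal.ofReal (K ^ m x / 2) := by
          rw [hp]
          apply ENNReal.ofReal_le_ofReal
          have : 0 < K ^ p := by positivity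
          rw [pow_succ]
          nlinarith

/-! ### Functions of locally bounded variation -/

theorem lbv_of_dist_le {E : Type*} [PseudoMetricSpace E] (f : ℝ → E) (G : ℝ → ℝ) (s : Set ℝ)
    (h : ∀ x ∈ s, ∀ y ∈ s, x ≤ y → dist (f x) (f y) ≤ G y - G x) :
    LocallyBoundedVariationOn f s := by
  have hG : MonotoneOn G s := fun x hx y hy hxy => by
    have := h x hx y hy hxy
    linarith [dist_nonneg (x := f x) (y := f y)]
  intro c d hc hd
  refine ne_top_of_le_ne_top (hG.locallyBoundedVariationOn c d hc hd) (iSup_le fun p => ?_)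
  refine le_trans (Finset.sum_le_sum fun i _ => ?_) (eVariationOn.sum_le p.2.2.1 p.2.2.2)
  rw [edist_dist, edist_dist]
  apply ENNReal.ofReal_le_ofReal
  rw [dist_comm, Real.dist_eq]
  exact (h _ (p.2.2.2 i).1 _ (p.2.2.2 (i+1)).1 (p.2.2.1 i.le_succ)).trans (le_abs_self _)

/-- Functions of locally bounded variation are measurable: the real and imaginary part of each
coordinate is a difference of two monotone functions. -/
theorem lbv_aesm {n : ℕ} (v : ℝ → Fin n → ℂ) (s : Set ℝ) (hs : MeasurableSet s)
    (hv : LocallyBoundedVariationOn v s) (ν : Measure ℝ) :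
    AEStronglyMeasurable v (ν.restrict s) := by
  have key : ∀ f : ℝ → ℝ, LocallyBoundedVariationOn f s → AEMeasurable f (ν.restrict s) := by
    intro f hf
    obtain ⟨p, q, hp, hq, rfl⟩ := hf.exists_monotoneOn_sub_monotoneOn
    exact (aemeasurable_restrict_of_monotoneOn hs hp).sub (aemeasurable_restrict_of_monotoneOn hs hq)
  refine (aemeasurable_pi_iff.2 fun i => ?_).aestronglyMeasurable
  have hre : LipschitzWith 1 fun z : Fin n → ℂ => (z i).re :=
    LipschitzWith.of_dist_le_mul fun z w => by
      rw [NNReal.coe_one, one_mul, Real.dist_eq, ← Complex.sub_re]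
      exact (Complex.abs_re_le_norm _).trans (by rw [← dist_eq_norm]; exact dist_le_pi_dist z w i)
  have him : LipschitzWith 1 fun z : Fin n → ℂ => (z i).im :=
    LipschitzWith.of_dist_le_mul fun z w => by
      rw [NNReal.coe_one, one_mul, Real.dist_eq, ← Complex.sub_im]
      exact (Complex.abs_im_le_norm _).trans (by rw [← dist_eq_norm]; exact dist_le_pi_dist z w i)
  have h1 := Complex.measurable_ofReal.comp_aemeasurable (key _ (hre.comp_locallyBoundedVariationOn hv))
  have h2 := Complex.measurable_ofReal.comp_aemeasurable (key _ (him.comp_locallyBoundedVariationOn hv))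
  have h3 := h1.add (h2.mul_const Complex.I)
  convert h3 using 2 with t
  exact (Complex.re_add_im (v t i)).symm

/-! ### The contraction estimate -/

theorem integrable_rhs {n : ℕ} (ρ : Measure ℝ) (M : ℝ → Matrix (Fin n) (Fin n) ℂ)
    (hM : ∀ i j, Integrable (fun t => M t i j) ρ) (g : ℝ → Fin n → ℂ) (hg : Integrable g ρ)
    (u : ℝ → Fin n → ℂ) (hu : AEStronglyMeasurable u ρ) (C : ℝ) (hC : ∀ᵐ t ∂ρ, ‖u t‖ ≤ C) :
    Integrable (fun t => (M t).mulVec (u t) + g t) ρ := by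
  refine Integrable.add (Integrable.of_eval fun i => ?_) hg
  simp only [Matrix.mulVec, dotProduct]
  refine integrable_finsetSum _ fun j _ => (hM i j).mul_bdd (c := C) ?_ ?_
  · exact (continuous_apply j).comp_aestronglyMeasurable hu
  · filter_upwards [hC] with t ht using (norm_le_pi_norm _ j).trans ht

theorem norm_mulVec_le {n : ℕ} (A : Matrix (Fin n) (Fin n) ℂ) (v : Fin n → ℂ) :
    ‖A.mulVec v‖ ≤ (∑ i, ∑ j, ‖A i j‖) * ‖v‖ := by
  refine (pi_norm_le_iff_of_nonneg (by positivity)).2 fun i => ?_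
  calc ‖A.mulVec v i‖ ≤ ∑ j, ‖A i j * v j‖ := norm_sum_le Finset.univ fun j => A i j * v j
    _ ≤ ∑ j, ‖A i j‖ * ‖v‖ := by
        refine Finset.sum_le_sum fun j _ => ?_
        rw [norm_mul]
        gcongr
        exact norm_le_pi_norm v j
    _ = (∑ j, ‖A i j‖) * ‖v‖ := (Finset.sum_mul _ _ _).symm
    _ ≤ _ := by
        refine mul_le_mul_of_nonneg_right ?_ (norm_nonneg v)
        exact Finset.single_le_sum (f := fun i => ∑ j, ‖A i j‖)
          (fun i _ => by positivity) (Finset.mem_univ i)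


/-- The operator `u ↦ u0 + ∫_{[x0,x)} (M u + g) dν` halves distances on `[x0,d]` measured in the
sup norm with weight `1/φ`, where `φ` is the weight of `exists_weight` for the measure `‖M‖ dν` on
`[x0,d)`. Only integrability of the two integrands is assumed, so the estimate also applies to a
limit of Picard iterates not yet known to have bounded variation. -/
theorem contraction {n : ℕ} (ν : Measure ℝ) (x0 d : ℝ) (M : ℝ → Matrix (Fin n) (Fin n) ℂ)
    (hM : ∀ i j, IntegrableOn (fun t => M t i j) (Set.Ico x0 d) ν) (g : ℝ → Fin n → ℂ) :
    ∃ φ : ℝ → ℝ, Monotone φ ∧ (∀ t, 1 ≤ φ t) ∧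
      ∀ u v : ℝ → Fin n → ℂ,
        IntegrableOn (fun t => (M t).mulVec (u t) + g t) (Set.Ico x0 d) ν →
        IntegrableOn (fun t => (M t).mulVec (v t) + g t) (Set.Ico x0 d) ν →
        ∀ C : ℝ, 0 ≤ C → (∀ t ∈ Set.Ico x0 d, ‖u t - v t‖ ≤ C * φ t) →
        ∀ x ≤ d, ‖(∫ t in Set.Ico x0 x, ((M t).mulVec (u t) + g t) ∂ν) -
          ∫ t in Set.Ico x0 x, ((M t).mulVec (v t) + g t) ∂ν‖ ≤ C / 2 * φ x := by
  set w : ℝ → ℝ := fun t => ∑ i, ∑ j, ‖M t i j‖ with hw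
  have hwi : IntegrableOn w (Set.Ico x0 d) ν :=
    integrable_finsetSum _ fun i _ => integrable_finsetSum _ fun j _ => (hM i j).norm
  have hw0 : ∀ t, 0 ≤ w t := fun t => by positivity
  set μ : Measure ℝ := (ν.restrict (Set.Ico x0 d)).withDensity fun t => ENNReal.ofReal (w t)
    with hμ
  have : IsFiniteMeasure μ := isFiniteMeasure_withDensity_ofReal hwi.2
  obtain ⟨φ, hφm, hφ1, hφ⟩ := exists_weight μ
  refine ⟨φ, hφm, hφ1, fun u v hu hv C hC huv x hx => ?_⟩
  have hsub : Set.Ico x0 x ⊆ Set.Ico x0 d := Set.Ico_subset_Ico_right hx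
  have hφ0 : ∀ t, 0 ≤ φ t := fun t => zero_le_one.trans (hφ1 t)
  rw [← integral_sub (hu.mono_set hsub) (hv.mono_set hsub),
    ← ENNReal.ofReal_le_ofReal_iff (mul_nonneg (by positivity) (hφ0 x)), ofReal_norm]
  have hrestr : (ν.restrict (Set.Ico x0 d)).restrict (Set.Iio x) = ν.restrict (Set.Ico x0 x) := by
    rw [Measure.restrict_restrict measurableSet_Iio]
    congr 1
    ext t
    simp only [Set.mem_inter_iff, Set.mem_Iio, Set.mem_Ico]
    constructor
    · rintro ⟨h1, h2, _⟩; exact ⟨h2, h1⟩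
    · rintro ⟨h1, h2⟩; exact ⟨h2, h1, h2.trans_le hx⟩
  calc ‖∫ t in Set.Ico x0 x, ((M t).mulVec (u t) + g t - ((M t).mulVec (v t) + g t)) ∂ν‖ₑ
      ≤ ∫⁻ t in Set.Ico x0 x, ‖(M t).mulVec (u t) + g t - ((M t).mulVec (v t) + g t)‖ₑ ∂ν :=
        enorm_integral_le_lintegral_enorm _
    _ ≤ ∫⁻ t in Set.Ico x0 x, ENNReal.ofReal C *
          (ENNReal.ofReal (w t) * ENNReal.ofReal (φ t)) ∂ν := by
        refine setLIntegral_mono' measurableSet_Ico fun t ht => ?_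
        rw [add_sub_add_right_eq_sub, ← Matrix.mulVec_sub, ← ofReal_norm,
          ← ENNReal.ofReal_mul (hw0 t), ← ENNReal.ofReal_mul hC]
        apply ENNReal.ofReal_le_ofReal
        calc _ ≤ w t * ‖u t - v t‖ := norm_mulVec_le _ _
          _ ≤ w t * (C * φ t) := by
              gcongr
              exact huv t (hsub ht)
          _ = _ := by ring
    _ = ENNReal.ofReal C * ∫⁻ t in Set.Iio x, ENNReal.ofReal (φ t) ∂μ := by
        rw [lintegral_const_mul' _ _ ENNReal.ofReal_ne_top, hμ,
          restrict_withDensity measurableSet_Iio, hrestr,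
          lintegral_withDensity_eq_lintegral_mul₀]
        · rfl
        · exact (hwi.mono_set hsub).1.aemeasurable.ennreal_ofReal
        · exact hφm.measurable.ennreal_ofReal.aemeasurable
    _ ≤ ENNReal.ofReal C * ENNReal.ofReal (φ x / 2) := by gcongr; exact hφ x
    _ = _ := by rw [← ENNReal.ofReal_mul hC]; congr 1; ring


/-! ### Regularity of indefinite integrals -/

theorem lbv_integral {n : ℕ} (ν : Measure ℝ) (x0 b : ℝ) (f : ℝ → Fin n → ℂ) (u0 : Fin n → ℂ)
    (hf : ∀ d < b, IntegrableOn f (Set.Ico x0 d) ν) :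
    LocallyBoundedVariationOn (fun x => u0 + ∫ t in Set.Ico x0 x, f t ∂ν) (Set.Ico x0 b) := by
  refine lbv_of_dist_le _ (fun x => ∫ t in Set.Ico x0 x, ‖f t‖ ∂ν) _ fun x hx y hy hxy => ?_
  have hd : Disjoint (Set.Ico x0 x) (Set.Ico x y) :=
    Set.disjoint_left.2 fun t ht ht' => not_lt.2 ht'.1 ht.2
  have hU : Set.Ico x0 x ∪ Set.Ico x y = Set.Ico x0 y := Set.Ico_union_Ico_eq_Ico hx.1 hxy
  have h1 := hf x hx.2
  have h2 : IntegrableOn f (Set.Ico x y) ν :=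
    (hf y hy.2).mono_set (Set.Ico_subset_Ico_left hx.1)
  rw [dist_add_left, ← hU, setIntegral_union hd measurableSet_Ico h1 h2,
    setIntegral_union hd measurableSet_Ico h1.norm h2.norm, dist_self_add_right, add_sub_cancel_left]
  exact norm_integral_le_integral_norm _

/-- Left-continuity of `x ↦ ∫_{[x0,x)} f dν`, by dominated convergence: for `t < x` the indicator of
`(-∞,y)` at `t` is eventually `1` as `y ↑ x`. -/
theorem leftCont_integral {n : ℕ} (ν : Measure ℝ) (x0 x : ℝ) (f : ℝ → Fin n → ℂ)
    (u0 : Fin n → ℂ) (hf : IntegrableOn f (Set.Ico x0 x) ν) :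
    Tendsto (fun x => u0 + ∫ t in Set.Ico x0 x, f t ∂ν) (nhdsWithin x (Set.Iio x))
      (nhds (u0 + ∫ t in Set.Ico x0 x, f t ∂ν)) := by
  refine tendsto_const_nhds.add ?_
  have hEq : (fun y => ∫ t in Set.Ico x0 x, (Set.Iio y).indicator f t ∂ν)
      =ᶠ[nhdsWithin x (Set.Iio x)] fun y => ∫ t in Set.Ico x0 y, f t ∂ν := by
    filter_upwards [self_mem_nhdsWithin] with y hy
    rw [setIntegral_indicator measurableSet_Iio]
    congr 2
    ext t
    simp only [Set.mem_inter_iff, Set.mem_Iio, Set.mem_Ico]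
    exact ⟨fun h => ⟨h.1.1, h.2⟩, fun h => ⟨⟨h.1, h.2.trans hy⟩, h.2⟩⟩
  refine Tendsto.congr' hEq (tendsto_integral_filter_of_dominated_convergence (fun t => ‖f t‖)
    (Eventually.of_forall fun y => hf.1.indicator measurableSet_Iio)
    (Eventually.of_forall fun y => Eventually.of_forall fun t => norm_indicator_le_norm_self _ _)
    hf.norm ?_)
  filter_upwards [ae_restrict_mem measurableSet_Ico] with t ht
  refine tendsto_const_nhds.congr' ?_
  filter_upwards [mem_nhdsWithin_of_mem_nhds (Ioi_mem_nhds ht.2)] with y hy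
  exact (Set.indicator_of_mem (show t ∈ Set.Iio y from hy) f).symm

/-! ### Uniqueness -/

theorem integrableOn_rhs_of_lbv {n : ℕ} (ν : Measure ℝ) (x0 b : ℝ)
    (M : ℝ → Matrix (Fin n) (Fin n) ℂ)
    (hM : ∀ i j, ∀ d < b, IntegrableOn (fun t => M t i j) (Set.Ico x0 d) ν) (g : ℝ → Fin n → ℂ)
    (hg : ∀ d < b, IntegrableOn g (Set.Ico x0 d) ν)
    (v : ℝ → Fin n → ℂ) (hv : LocallyBoundedVariationOn v (Set.Ico x0 b)) (d : ℝ) (hd : d < b) :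
    IntegrableOn (fun t => (M t).mulVec (v t) + g t) (Set.Ico x0 d) ν := by
  rcases lt_or_ge d x0 with h | h
  · rw [Set.Ico_eq_empty (not_lt.2 h.le)]
    exact integrableOn_empty
  have hx0 : x0 ∈ Set.Ico x0 b := ⟨le_rfl, h.trans_lt hd⟩
  have hbv := hv x0 d hx0 ⟨h, hd⟩
  refine integrable_rhs _ M (fun i j => hM i j d hd) g (hg d hd) v
    ((lbv_aesm v _ measurableSet_Ico hv ν).mono_measure
      (Measure.restrict_mono_set ν (Set.Ico_subset_Ico_right hd.le)))
    ((eVariationOn v (Set.Ico x0 b ∩ Set.Icc x0 d)).toReal + ‖v x0‖) ?_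
  filter_upwards [ae_restrict_mem measurableSet_Ico] with t ht
  have h1 := hbv.dist_le (x := t) (y := x0) ⟨⟨ht.1, ht.2.trans hd⟩, ht.1, ht.2.le⟩
    ⟨hx0, le_rfl, h⟩
  rw [dist_eq_norm] at h1
  linarith [norm_sub_norm_le (v t) (v x0)]

theorem exists_bound_sub {n : ℕ} (x0 b : ℝ) (u v : ℝ → Fin n → ℂ)
    (hu : LocallyBoundedVariationOn u (Set.Ico x0 b))
    (hv : LocallyBoundedVariationOn v (Set.Ico x0 b)) (d : ℝ) (hd : d ∈ Set.Ico x0 b) :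
    ∃ C, 0 ≤ C ∧ ∀ t ∈ Set.Icc x0 d, ‖u t - v t‖ ≤ C := by
  have hx0 : x0 ∈ Set.Ico x0 b := ⟨le_rfl, hd.1.trans_lt hd.2⟩
  have h1 := hu x0 d hx0 hd
  have h2 := hv x0 d hx0 hd
  set I := Set.Ico x0 b ∩ Set.Icc x0 d
  refine ⟨(eVariationOn u I).toReal + (eVariationOn v I).toReal + ‖u x0 - v x0‖,
    by positivity, fun t ht => ?_⟩
  have hx0I : x0 ∈ I := ⟨hx0, le_rfl, hd.1⟩
  have htI : t ∈ I := ⟨⟨ht.1, ht.2.trans_lt hd.2⟩, ht⟩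
  have h3 := h1.dist_le htI hx0I
  have h4 := h2.dist_le htI hx0I
  rw [dist_eq_norm] at h3 h4
  have h5 : u t - v t = (u t - u x0) - (v t - v x0) + (u x0 - v x0) := by abel
  rw [h5]
  linarith [norm_add_le ((u t - u x0) - (v t - v x0)) (u x0 - v x0),
    norm_sub_le (u t - u x0) (v t - v x0)]

theorem uniqueness {n : ℕ} (ν : Measure ℝ) (x0 b : ℝ)
    (M : ℝ → Matrix (Fin n) (Fin n) ℂ)
    (hM : ∀ i j, ∀ d < b, IntegrableOn (fun t => M t i j) (Set.Ico x0 d) ν) (g : ℝ → Fin n → ℂ)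
    (hg : ∀ d < b, IntegrableOn g (Set.Ico x0 d) ν) (u0 : Fin n → ℂ)
    (u v : ℝ → Fin n → ℂ) (hu : LocallyBoundedVariationOn u (Set.Ico x0 b))
    (hv : LocallyBoundedVariationOn v (Set.Ico x0 b))
    (hu' : ∀ x ∈ Set.Ico x0 b, u x = u0 + ∫ t in Set.Ico x0 x, ((M t).mulVec (u t) + g t) ∂ν)
    (hv' : ∀ x ∈ Set.Ico x0 b, v x = u0 + ∫ t in Set.Ico x0 x, ((M t).mulVec (v t) + g t) ∂ν) :
    Set.EqOn u v (Set.Ico x0 b) := by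
  intro d hd
  obtain ⟨φ, hφm, hφ1, hφ⟩ := contraction ν x0 d M (fun i j => hM i j d hd.2) g
  obtain ⟨C, hC, hCuv⟩ := exists_bound_sub x0 b u v hu hv d hd
  have key : ∀ k : ℕ, ∀ t ∈ Set.Icc x0 d, ‖u t - v t‖ ≤ C * (1 / 2) ^ k * φ t := by
    intro k
    induction k with
    | zero =>
      intro t ht
      rw [pow_zero, mul_one]
      exact (hCuv t ht).trans (le_mul_of_one_le_right hC (hφ1 t))
    | succ k ih =>
      intro t ht
      have htb := ht.2.trans_lt hd.2
      rw [hu' t ⟨ht.1, htb⟩, hv' t ⟨ht.1, htb⟩, add_sub_add_left_eq_sub]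
      refine (hφ u v (integrableOn_rhs_of_lbv ν x0 b M hM g hg u hu d hd.2)
        (integrableOn_rhs_of_lbv ν x0 b M hM g hg v hv d hd.2) _ (by positivity)
        (fun t ht => ih t ⟨ht.1, ht.2.le⟩) t ht.2).trans_eq ?_
      ring
  have hlim : Tendsto (fun k : ℕ => C * (1 / 2) ^ k * φ d) atTop (nhds (C * 0 * φ d)) :=
    ((tendsto_pow_atTop_nhds_zero_of_lt_one (by norm_num) (by norm_num)).const_mul C).mul_const _
  have h0 := ge_of_tendsto' hlim fun k => key k d ⟨hd.1, le_rfl⟩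
  rw [mul_zero, zero_mul] at h0
  exact sub_eq_zero.1 (norm_le_zero_iff.1 h0)

/-! ### Existence -/

/-- The Picard iterates of `u ↦ u0 + ∫_{[x0,·)} (M u + g) dν`, started at the constant `u0`. They are
defined on all of `ℝ`, but are controlled only on `[x0,b)`. -/
noncomputable def picard {n : ℕ} (ν : Measure ℝ) (x0 : ℝ) (M : ℝ → Matrix (Fin n) (Fin n) ℂ)
    (g : ℝ → Fin n → ℂ) (u0 : Fin n → ℂ) : ℕ → ℝ → Fin n → ℂ
  | 0 => fun _ => u0
  | k + 1 => fun x =>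
      u0 + ∫ t in Set.Ico x0 x, ((M t).mulVec (picard ν x0 M g u0 k t) + g t) ∂ν

/-- Integrability of `M u + g` is part of the conclusion because it is what makes the integral
equation meaningful and `u` of locally bounded variation. -/
theorem existence {n : ℕ} (ν : Measure ℝ) (x0 b : ℝ)
    (M : ℝ → Matrix (Fin n) (Fin n) ℂ)
    (hM : ∀ i j, ∀ d < b, IntegrableOn (fun t => M t i j) (Set.Ico x0 d) ν) (g : ℝ → Fin n → ℂ)
    (hg : ∀ d < b, IntegrableOn g (Set.Ico x0 d) ν) (u0 : Fin n → ℂ) :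
    ∃ u : ℝ → Fin n → ℂ,
      (∀ d < b, IntegrableOn (fun t => (M t).mulVec (u t) + g t) (Set.Ico x0 d) ν) ∧
      ∀ x ∈ Set.Ico x0 b, u x = u0 + ∫ t in Set.Ico x0 x, ((M t).mulVec (u t) + g t) ∂ν := by
  set U := picard ν x0 M g u0 with hU
  have hbv : ∀ k, LocallyBoundedVariationOn (U k) (Set.Ico x0 b) := by
    intro k
    induction k with
    | zero => exact lbv_of_dist_le _ (fun _ => 0) _ fun x _ y _ _ => by simp [hU, picard]
    | succ k ih =>
      exact lbv_integral ν x0 b _ u0 fun d hd => integrableOn_rhs_of_lbv ν x0 b M hM g hg _ ih d hd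
  have hint := fun k d hd => integrableOn_rhs_of_lbv ν x0 b M hM g hg (U k) (hbv k) d hd
  -- On `[x0,d]`, consecutive iterates differ by at most `C φ 2⁻ᵏ`, for every weight `φ` with the
  -- contraction property.
  have hgeo : ∀ d ∈ Set.Ico x0 b, ∀ φ : ℝ → ℝ, (∀ t, 1 ≤ φ t) →
      (∀ u v : ℝ → Fin n → ℂ,
        IntegrableOn (fun t => (M t).mulVec (u t) + g t) (Set.Ico x0 d) ν →
        IntegrableOn (fun t => (M t).mulVec (v t) + g t) (Set.Ico x0 d) ν →
        ∀ C : ℝ, 0 ≤ C → (∀ t ∈ Set.Ico x0 d, ‖u t - v t‖ ≤ C * φ t) →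
        ∀ x ≤ d, ‖(∫ t in Set.Ico x0 x, ((M t).mulVec (u t) + g t) ∂ν) -
          ∫ t in Set.Ico x0 x, ((M t).mulVec (v t) + g t) ∂ν‖ ≤ C / 2 * φ x) →
      ∃ C, 0 ≤ C ∧ ∀ t ∈ Set.Icc x0 d, ∀ k, dist (U k t) (U (k + 1) t) ≤ C * φ t * (1 / 2) ^ k := by
    intro d hd φ hφ1 hφ
    obtain ⟨C, hC, hC1⟩ := exists_bound_sub x0 b _ _ (hbv 0) (hbv 1) d hd
    refine ⟨C, hC, fun t ht k => ?_⟩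
    rw [dist_eq_norm]
    induction k generalizing t with
    | zero =>
      rw [pow_zero, mul_one]
      exact (hC1 t ht).trans (le_mul_of_one_le_right hC (hφ1 t))
    | succ k ih =>
      change ‖(u0 + ∫ t in Set.Ico x0 t, ((M t).mulVec (U k t) + g t) ∂ν) -
        (u0 + ∫ t in Set.Ico x0 t, ((M t).mulVec (U (k + 1) t) + g t) ∂ν)‖ ≤ _
      rw [add_sub_add_left_eq_sub]
      refine (hφ _ _ (hint k d hd.2) (hint (k + 1) d hd.2) (C * (1 / 2) ^ k) (by positivity)
        (fun t ht => (ih t ⟨ht.1, ht.2.le⟩).trans_eq (by ring)) t ht.2).trans_eq ?_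
      ring
  have hlim : ∀ x ∈ Set.Ico x0 b, ∃ l, Tendsto (fun k => U k x) atTop (nhds l) := by
    intro x hx
    obtain ⟨φ, -, hφ1, hφ⟩ := contraction ν x0 x M (fun i j => hM i j x hx.2) g
    obtain ⟨C, -, hC⟩ := hgeo x hx φ hφ1 hφ
    exact cauchySeq_tendsto_of_complete
      (cauchySeq_of_le_geometric (1 / 2) _ (by norm_num) (hC x ⟨hx.1, le_rfl⟩))
  choose! u hu using hlim
  -- The limit is measurable, and bounded on `[x0,d)` by the sum of the geometric series.
  have hui : ∀ d < b, IntegrableOn (fun t => (M t).mulVec (u t) + g t) (Set.Ico x0 d) ν := by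
    intro d hd
    rcases lt_or_ge d x0 with h | h
    · rw [Set.Ico_eq_empty (not_lt.2 h.le)]
      exact integrableOn_empty
    obtain ⟨φ, hφm, hφ1, hφ⟩ := contraction ν x0 d M (fun i j => hM i j d hd) g
    obtain ⟨C, hC0, hC⟩ := hgeo d ⟨h, hd⟩ φ hφ1 hφ
    refine integrable_rhs _ M (fun i j => hM i j d hd) g (hg d hd) u ?_
      (‖u0‖ + C * φ d * (1 / 2) ^ 0 / (1 - 1 / 2)) ?_
    · refine aestronglyMeasurable_of_tendsto_ae atTop (f := U) (fun k => ?_) ?_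
      · exact (lbv_aesm _ _ measurableSet_Ico (hbv k) ν).mono_measure
          (Measure.restrict_mono_set ν (Set.Ico_subset_Ico_right hd.le))
      · filter_upwards [ae_restrict_mem measurableSet_Ico] with t ht
        exact hu t ⟨ht.1, ht.2.trans hd⟩
    · filter_upwards [ae_restrict_mem measurableSet_Ico] with t ht
      have h1 := dist_le_of_le_geometric_of_tendsto (1 / 2) _ (by norm_num)
        (hC t ⟨ht.1, ht.2.le⟩) (hu t ⟨ht.1, ht.2.trans hd⟩) 0
      have h2 : C * φ t * (1 / 2) ^ 0 / (1 - 1 / 2) ≤ C * φ d * (1 / 2) ^ 0 / (1 - 1 / 2) := by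
        have := mul_le_mul_of_nonneg_left (hφm ht.2.le) hC0
        norm_num
        linarith
      rw [dist_comm, dist_eq_norm] at h1
      have h3 := norm_sub_norm_le (u t) u0
      exact (sub_le_iff_le_add'.1 (h3.trans (h1.trans h2)))
  refine ⟨u, hui, fun d hd => ?_⟩
  obtain ⟨φ, hφm, hφ1, hφ⟩ := contraction ν x0 d M (fun i j => hM i j d hd.2) g
  obtain ⟨C, hC0, hC⟩ := hgeo d hd φ hφ1 hφ
  have hφ0 : ∀ t, 0 ≤ φ t := fun t => zero_le_one.trans (hφ1 t)
  -- Both sides of the equation are limits of `U (k + 1) d = T (U k) d`.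
  refine tendsto_nhds_unique ((tendsto_add_atTop_iff_nat 1).2 (hu d hd)) ?_
  refine tendsto_iff_norm_sub_tendsto_zero.2 ?_
  have hz : Tendsto (fun k : ℕ => C * (1 / 2) ^ k * φ d) atTop (nhds 0) := by
    simpa using ((tendsto_pow_atTop_nhds_zero_of_lt_one (r := (1 / 2 : ℝ))
      (by norm_num) (by norm_num)).const_mul C).mul_const (φ d)
  refine squeeze_zero (fun k => norm_nonneg _) (fun k => ?_) hz
  change ‖(u0 + ∫ t in Set.Ico x0 d, ((M t).mulVec (U k t) + g t) ∂ν) - _‖ ≤ _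
  rw [add_sub_add_left_eq_sub]
  refine (hφ _ _ (hint k d hd.2) (hui d hd.2) (2 * (C * (1 / 2) ^ k)) (by positivity)
    (fun t ht => ?_) d le_rfl).trans_eq (by ring)
  rw [← dist_eq_norm]
  refine (dist_le_of_le_geometric_of_tendsto (1 / 2) _ (by norm_num)
        (hC t ⟨ht.1, ht.2.le⟩) (hu t ⟨ht.1, ht.2.trans hd.2⟩) k).trans_eq ?_
  ring

/-- **Existence and uniqueness of left-continuous solutions (Bennewitz).**
On an interval `(a,b)`, with an order-zero coefficient `r = M dν` and inhomogeneity
`g dν` (where `ν` is finite on compact subintervals of `(a,b)` and `M`, `g` are locally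
`ν`-integrable), for every `x0 ∈ (a,b)` and `u0 ∈ ℂⁿ` there is exactly one left-continuous
function `u : [x0,b) → ℂⁿ` of locally bounded variation satisfying
`u(x) = u0 + ∫_{[x0,x)} (M(t)·u(t) + g(t)) dν(t)` for all `x ∈ [x0,b)`. -/
theorem stmt_1 (a b : ℝ) (n : ℕ) (ν : Measure ℝ)
    (hν : ∀ c d : ℝ, a < c → d < b → ν (Set.Icc c d) < ⊤)
    (M : ℝ → Matrix (Fin n) (Fin n) ℂ)
    (hM : ∀ (i j : Fin n) (c d : ℝ), a < c → d < b →
      IntegrableOn (fun t => M t i j) (Set.Icc c d) ν)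
    (g : ℝ → Fin n → ℂ)
    (hg : ∀ c d : ℝ, a < c → d < b → IntegrableOn g (Set.Icc c d) ν)
    (x0 : ℝ) (hx0 : x0 ∈ Set.Ioo a b) (u0 : Fin n → ℂ) :
    ∃ u : ℝ → Fin n → ℂ,
      (LocallyBoundedVariationOn u (Set.Ico x0 b) ∧
        (∀ x ∈ Set.Ioo x0 b, Tendsto u (nhdsWithin x (Set.Iio x)) (nhds (u x))) ∧
        (∀ x ∈ Set.Ico x0 b,
          u x = u0 + ∫ t in Set.Ico x0 x, ((M t).mulVec (u t) + g t) ∂ν)) ∧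
      ∀ v : ℝ → Fin n → ℂ,
        (LocallyBoundedVariationOn v (Set.Ico x0 b) ∧
          (∀ x ∈ Set.Ioo x0 b, Tendsto v (nhdsWithin x (Set.Iio x)) (nhds (v x))) ∧
          (∀ x ∈ Set.Ico x0 b,
            v x = u0 + ∫ t in Set.Ico x0 x, ((M t).mulVec (v t) + g t) ∂ν)) →
        Set.EqOn u v (Set.Ico x0 b) := by
  have hM' : ∀ i j, ∀ d < b, IntegrableOn (fun t => M t i j) (Set.Ico x0 d) ν :=
    fun i j d hd => (hM i j x0 d hx0.1 hd).mono_set Set.Ico_subset_Icc_self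
  have hg' : ∀ d < b, IntegrableOn g (Set.Ico x0 d) ν :=
    fun d hd => (hg x0 d hx0.1 hd).mono_set Set.Ico_subset_Icc_self
  obtain ⟨u, hui, hu⟩ := existence ν x0 b M hM' g hg' u0
  have hbv : LocallyBoundedVariationOn u (Set.Ico x0 b) := by
    intro c d hc hd
    have h := lbv_integral ν x0 b _ u0 hui c d hc hd
    rwa [BoundedVariationOn, ← eVariationOn.congr fun x hx => hu x hx.1] at h
  refine ⟨u, ⟨hbv, fun x hx => ?_, hu⟩, fun v hv =>
    uniqueness ν x0 b M hM' g hg' u0 u v hbv hv.1 hu hv.2.2⟩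
  rw [hu x ⟨hx.1.le, hx.2⟩]
  refine (leftCont_integral ν x0 x _ u0 (hui x hx.2)).congr' ?_
  filter_upwards [self_mem_nhdsWithin, mem_nhdsWithin_of_mem_nhds (Ioi_mem_nhds hx.1)] with y hy hy'
  exact (hu y ⟨le_of_lt hy', lt_trans hy hx.2⟩).symm
end
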